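/- arXiv:1706.03433 — 3 statements merged into one kernel-verified Lean document; each statement's English description precedes it below -/
import Mathlib

section
/- Let a, k, t, m, n be rational numbers with m² + n² ≠ 0. Set A = m² + n², H = 4nm(n² − m²), K = m⁴ − 6m²n² + n⁴, I = H(a + 2k + 1)/A, L = K(a + 2k + 1)/A, J = (n² − m²)(4mnk(k + a + 1) + a(m² + 2mn − n²))/A², M = (m² + 2mn − n²)((m² − 2mn − n²)k(k + a + 1) − 2amn)/A², x = Ht² + It + J, and y = Kt² + Lt + M. Then x(x+a) + y(y+a) = (At+k)(At+k+a)(At+k+a+1)(At+k+1); that is, with f(X) = X(X+a) and z = (At+k)(At+k+a+1), one has f(z) = f(x) + f(y). -/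
/-!
Put `z = (At+k)(At+k+a+1)`, `u = m² - n²`, `v = 2mn`, so that `A² = u² + v²`, `H = -2uv` and
`K = u² - v²`. Both quadratics are affine in `z`: `A² x = H z - a u (u+v)` and
`A² y = K z - a v (u+v)`. The right-hand side of the theorem is `z (z + a)`, so after
multiplication by `A⁴` the claim is a polynomial identity in `u, v, z, a`: the coefficients of
`z²`, `a z` and `a²` agree because `H² + K² = (u² + v²)²`,
`-2(u+v)(Hu + Kv) + A²(H + K) = A⁴` and `(u+v)²(u² + v²) = A² (u+v)²`.
-/

/-- For rational `a, k, t, m, n` with `m² + n² ≠ 0`, the quadratics `x, y` in `t`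
built from `A = m² + n²`, `H = 4nm(n² - m²)`, `K = m⁴ - 6m²n² + n⁴`, etc.,
satisfy `x(x+a) + y(y+a) = (At+k)(At+k+a)(At+k+a+1)(At+k+1)`; that is, with
`f(X) = X(X+a)` and `z = (At+k)(At+k+a+1)`, `f(z) = f(x) + f(y)`. -/
theorem stmt_11 (a k t m n : ℚ) (hmn : m ^ 2 + n ^ 2 ≠ 0)
    (A H K I L J M x y : ℚ)
    (hA : A = m ^ 2 + n ^ 2)
    (hH : H = 4 * n * m * (n ^ 2 - m ^ 2))
    (hK : K = m ^ 4 - 6 * m ^ 2 * n ^ 2 + n ^ 4)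
    (hI : I = H * (a + 2 * k + 1) / A)
    (hL : L = K * (a + 2 * k + 1) / A)
    (hJ : J = (n ^ 2 - m ^ 2) *
      (4 * m * n * k * (k + a + 1) + a * (m ^ 2 + 2 * m * n - n ^ 2)) / A ^ 2)
    (hM : M = (m ^ 2 + 2 * m * n - n ^ 2) *
      ((m ^ 2 - 2 * m * n - n ^ 2) * k * (k + a + 1) - 2 * a * m * n) / A ^ 2)
    (hx : x = H * t ^ 2 + I * t + J)
    (hy : y = K * t ^ 2 + L * t + M) :
    x * (x + a) + y * (y + a) =
      (A * t + k) * (A * t + k + a) * (A * t + k + a + 1) * (A * t + k + 1) := by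
  have hA0 : A ≠ 0 := hA ▸ hmn
  obtain ⟨u, hu⟩ : ∃ u, u = m ^ 2 - n ^ 2 := ⟨_, rfl⟩
  obtain ⟨v, hv⟩ : ∃ v, v = 2 * m * n := ⟨_, rfl⟩
  obtain ⟨z, hz⟩ : ∃ z, z = (A * t + k) * (A * t + k + a + 1) := ⟨_, rfl⟩
  have hAuv : A ^ 2 = u ^ 2 + v ^ 2 := by rw [hA, hu, hv]; ring
  have hHuv : H = -2 * u * v := by rw [hH, hu, hv]; ring
  have hKuv : K = u ^ 2 - v ^ 2 := by rw [hK, hu, hv]; ring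
  have hJuv : A ^ 2 * J = H * (k * (k + a + 1)) - a * u * (u + v) := by
    rw [hJ, mul_div_cancel₀ _ (pow_ne_zero 2 hA0), hH, hu, hv]; ring
  have hMuv : A ^ 2 * M = K * (k * (k + a + 1)) - a * v * (u + v) := by
    rw [hM, mul_div_cancel₀ _ (pow_ne_zero 2 hA0), hK, hu, hv]; ring
  have hIA : A * I = H * (a + 2 * k + 1) := by rw [hI, mul_div_cancel₀ _ hA0]
  have hLA : A * L = K * (a + 2 * k + 1) := by rw [hL, mul_div_cancel₀ _ hA0]
  have hxz : A ^ 2 * x = H * z - a * u * (u + v) := by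
    rw [hx, hz]; linear_combination A * t * hIA + hJuv
  have hyz : A ^ 2 * y = K * z - a * v * (u + v) := by
    rw [hy, hz]; linear_combination A * t * hLA + hMuv
  have hfz : (A * t + k) * (A * t + k + a) * (A * t + k + a + 1) * (A * t + k + 1)
      = z * (z + a) := by rw [hz]; ring
  rw [hfz]
  refine mul_left_cancel₀ (pow_ne_zero 2 (pow_ne_zero 2 hA0)) ?_
  calc (A ^ 2) ^ 2 * (x * (x + a) + y * (y + a))
      = (A ^ 2 * x) * (A ^ 2 * x + A ^ 2 * a) + (A ^ 2 * y) * (A ^ 2 * y + A ^ 2 * a) := by ring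
    _ = (A ^ 2) ^ 2 * (z * (z + a)) := by rw [hxz, hyz, hAuv, hHuv, hKuv]; ring
end

section
/- Let a, T, k be rational numbers. Define x = −(2Tk + ak + a)/(k² + 1) and y = −(k+1)(Tk + ak − T)/(k² + 1). Then T(T+a) = x(x+a) + y(y+a). -/
/-- Rational parametrization of `f(T) = f(x) + f(y)` for `f(X) = X(X+a)`:
with `x = -(2Tk + ak + a)/(k² + 1)` and `y = -(k+1)(Tk + ak - T)/(k² + 1)`,
one has `T(T+a) = x(x+a) + y(y+a)`. -/
theorem stmt_16 (a T k : ℚ) (x y : ℚ)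
    (hx : x = -(2 * T * k + a * k + a) / (k ^ 2 + 1))
    (hy : y = -((k + 1) * (T * k + a * k - T)) / (k ^ 2 + 1)) :
    T * (T + a) = x * (x + a) + y * (y + a) := by
  have hk : k ^ 2 + 1 ≠ 0 := by positivity
  -- `(x, y)` is the second intersection of the conic with the line of slope `k` through `(0, T)`.
  have hline : y = T + k * x := by
    rw [hx, hy]
    field_simp
    ring
  have hroot : x * (k ^ 2 + 1) = -(2 * T * k + a * k + a) := by
    rw [hx, div_mul_cancel₀ _ hk]
  rw [hline]
  linear_combination -x * hroot
end

section
/- Let a, b, T be rational numbers with T ≠ 0 and D := 9T⁴ + 12(a+b)T³ + (4a² + 17ab + 4b²)T² + 6ab(a+b)T + 3a²b² ≠ 0. Define x = (9T⁶ + 12(a+b)T⁵ + (4a² + 17ab + 4b²)T⁴ + 9ab(a+b)T³ + (2a³b + 7a²b² + 2ab³)T² + 2a²b²(a+b)T + a³b³)/(T·D) and y = (3T² + 2Ta + 2Tb + ab)·(−(3a+3b)T³ − 2(a+b)²T² − 2ab(a+b)T − a²b²)/(T·D). Then x(x+a)(x+b) + y(y+a)(y+b) = T(T+a)(T+b). 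-/
/-- The rational solution of `f(T) = f(x) + f(y)` for `f(X) = X(X+a)(X+b)`
arising from the point `[2]W` on the associated elliptic curve: for rational
`a, b, T` with `T ≠ 0` and nonvanishing denominator `D`, the displayed `x, y`
satisfy `x(x+a)(x+b) + y(y+a)(y+b) = T(T+a)(T+b)`. -/
theorem stmt_19 (a b T : ℚ) (hT : T ≠ 0) (D x y : ℚ)
    (hD : D = 9 * T ^ 4 + 12 * (a + b) * T ^ 3 +
      (4 * a ^ 2 + 17 * a * b + 4 * b ^ 2) * T ^ 2 +
      6 * a * b * (a + b) * T + 3 * a ^ 2 * b ^ 2)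
    (hD0 : D ≠ 0)
    (hx : x = (9 * T ^ 6 + 12 * (a + b) * T ^ 5 +
      (4 * a ^ 2 + 17 * a * b + 4 * b ^ 2) * T ^ 4 +
      9 * a * b * (a + b) * T ^ 3 +
      (2 * a ^ 3 * b + 7 * a ^ 2 * b ^ 2 + 2 * a * b ^ 3) * T ^ 2 +
      2 * a ^ 2 * b ^ 2 * (a + b) * T + a ^ 3 * b ^ 3) / (T * D))
    (hy : y = (3 * T ^ 2 + 2 * T * a + 2 * T * b + a * b) *
      (-(3 * a + 3 * b) * T ^ 3 - 2 * (a + b) ^ 2 * T ^ 2 -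
        2 * a * b * (a + b) * T - a ^ 2 * b ^ 2) / (T * D)) :
    x * (x + a) * (x + b) + y * (y + a) * (y + b) = T * (T + a) * (T + b) := by
  -- Clearing the denominator `(T * D) ^ 3` leaves a polynomial identity in `a`, `b`, `T`.
  have hTD : T * D ≠ 0 := mul_ne_zero hT hD0
  have hx' := (eq_div_iff hTD).mp hx
  have hy' := (eq_div_iff hTD).mp hy
  refine mul_right_cancel₀ (pow_ne_zero 3 hTD) ?_
  have key : (x * (x + a) * (x + b) + y * (y + a) * (y + b)) * (T * D) ^ 3 =
      (x * (T * D)) * (x * (T * D) + a * (T * D)) * (x * (T * D) + b * (T * D)) +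
      (y * (T * D)) * (y * (T * D) + a * (T * D)) * (y * (T * D) + b * (T * D)) := by
    ring
  rw [key, hx', hy', hD]
  ring
end
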